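/- Let d ≥ 2, 2 ≤ p ≤ ∞, and let φ : [0, ∞) → [0, 1] be a smooth function supported in the interval [1/2, 2]. There exists a constant C, depending only on d, p and φ, such that for every j ∈ ℤ, every real t ≠ 0, and every Schwartz function g on ℝ^d, the function w_j(x) = (2π)^{−d} ∫_{ℝ^d} e^{i x·κ} e^{i t |κ|} φ(2^{−j}|κ|) ĝ(κ) dκ satisfies ‖w_j‖_{L^p(ℝ^d)} ≤ C · |t|^{−(d−1)(p−2)/(2p)} · 2^{j (d+1)(p−2)/(2p)} · ‖g‖_{L^{p'}(ℝ^d)}, where p' is the conjugate exponent of p (1/p + 1/p' = 1). -/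

import Mathlib

open MeasureTheory ENNReal
open scoped RealInnerProductSpace

noncomputable section

/-- Shorthand for Euclidean space `ℝ^d`. -/
abbrev Ed (d : ℕ) := EuclideanSpace ℝ (Fin d)

/-- The homogeneous Besov (Gagliardo) seminorm `[f]_{r,p}`. -/
def gagliardo (d : ℕ) (r p : ℝ) {F : Type*} [NormedAddCommGroup F] (f : Ed d → F) : ℝ≥0∞ :=
  (∫⁻ x, ∫⁻ y, (‖f x - f y‖₊ : ℝ≥0∞) ^ p / (‖x - y‖₊ : ℝ≥0∞) ^ (r * p + d)) ^ (1 / p)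

/-- The homogeneous Hölder seminorm `{f}_r`. -/
def holderSemi (d : ℕ) (r : ℝ) {F : Type*} [NormedAddCommGroup F] (f : Ed d → F) : ℝ≥0∞ :=
  ⨆ x, ⨆ y, (‖f x - f y‖₊ : ℝ≥0∞) / (‖x - y‖₊ : ℝ≥0∞) ^ r

/-- The Fourier transform `f̂(κ) = ∫ e^{-i x·κ} f(x) dx`. -/
def ftransform (d : ℕ) (f : Ed d → ℂ) (κ : Ed d) : ℂ :=
  ∫ x, Complex.exp (-(Complex.I * (⟪x, κ⟫ : ℂ))) * f x

/-- The homogeneous Sobolev seminorm `[f]_θ = ((2π)^{-d} ∫ |κ|^{2θ} |f̂(κ)|² dκ)^{1/2}`. -/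
def sobolevSemi (d : ℕ) (θ : ℝ) (f : Ed d → ℂ) : ℝ≥0∞ :=
  (ENNReal.ofReal ((2 * Real.pi) ^ (-(d : ℝ))) *
    ∫⁻ κ, (‖κ‖₊ : ℝ≥0∞) ^ (2 * θ) * (‖ftransform d f κ‖₊ : ℝ≥0∞) ^ (2 : ℕ)) ^ ((1 : ℝ) / 2)

/-- A symbol of class `S⁰_{ph}`: smooth away from the origin and positively
homogeneous of degree `0`. -/
def IsSymbol0 (d : ℕ) (a : Ed d → ℂ) : Prop :=
  ContDiffOn ℝ (⊤ : ℕ∞) a {0}ᶜ ∧ ∀ (c : ℝ) (κ : Ed d), 0 < c → κ ≠ 0 → a (c • κ) = a κ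

/-- The operator `𝔞[f](x) = (2π)^{-d} ∫ e^{i x·κ} a(κ) f̂(κ) dκ` associated with a symbol. -/
def symbOp (d : ℕ) (a : Ed d → ℂ) (f : Ed d → ℂ) (x : Ed d) : ℂ :=
  (((2 * Real.pi) ^ (-(d : ℝ)) : ℝ) : ℂ) *
    ∫ κ, Complex.exp (Complex.I * (⟪x, κ⟫ : ℂ)) * a κ * ftransform d f κ

/-- The partial derivative `∂_i f(x)`. -/
def pd (d : ℕ) (i : Fin d) (f : Ed d → ℝ) (x : Ed d) : ℝ :=
  fderiv ℝ f x (EuclideanSpace.single i 1)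

/-- The half-wave propagator `(e^{itD} g)(x) = (2π)^{-d} ∫ e^{i x·κ} e^{i t|κ|} ĝ(κ) dκ`. -/
def halfWave (d : ℕ) (t : ℝ) (g : Ed d → ℂ) (x : Ed d) : ℂ :=
  (((2 * Real.pi) ^ (-(d : ℝ)) : ℝ) : ℂ) *
    ∫ κ, Complex.exp (Complex.I * ((⟪x, κ⟫ : ℂ) + (t : ℂ) * ((‖κ‖ : ℝ) : ℂ))) *
      ftransform d g κ

end


/-- The oscillatory integral occurring in the nonstationary regime. -/
theorem nonstat_aux (N : ℕ) : ∀ (k : ℕ) (f : ℝ → ℂ), ContDiff ℝ (⊤ : ℕ∞) f →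
    (∀ u, u ∉ Set.Icc (1 / 2 : ℝ) 2 → f u = 0) →
    ∃ C : ℝ, 0 ≤ C ∧ ∀ t σ : ℝ, t ≠ 0 → |σ| ≤ 1 / 8 →
      ‖∫ u in (1 / 4 : ℝ)..3, f u * ((((1 - 2 * σ * u)⁻¹ : ℝ) : ℂ) ^ k) *
        Complex.exp (Complex.I * ((t * (u - σ * u ^ 2) : ℝ) : ℂ))‖ ≤ C * (|t|⁻¹) ^ N := by
  have hpos : ∀ σ u : ℝ, |σ| ≤ 1 / 8 → u ∈ Set.Icc (1 / 4 : ℝ) 3 → 1 / 4 ≤ 1 - 2 * σ * u := by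
    intro σ u hσ hu
    have := abs_le.1 hσ
    nlinarith [hu.1, hu.2, this.1, this.2]
  induction N with
  | zero =>
    intro k f hf hf0
    obtain ⟨M, hM⟩ := (isCompact_Icc (a := (1 / 4 : ℝ)) (b := 3)).exists_bound_of_continuousOn
      hf.continuous.continuousOn
    refine ⟨max M 0 * 4 ^ k * |3 - 1 / 4|, by positivity, ?_⟩
    intro t σ ht hσ
    rw [pow_zero, mul_one]
    apply intervalIntegral.norm_integral_le_of_norm_le_const
    intro u hu
    rw [Set.uIoc_of_le (by norm_num)] at hu
    have hu' : u ∈ Set.Icc (1 / 4 : ℝ) 3 := ⟨hu.1.le, hu.2⟩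
    have h1 := hpos σ u hσ hu'
    rw [norm_mul, norm_mul, mul_comm Complex.I, Complex.norm_exp_ofReal_mul_I, mul_one, norm_pow,
      Complex.norm_real, Real.norm_eq_abs, abs_inv, abs_of_pos (by linarith)]
    have h2 : (1 - 2 * σ * u)⁻¹ ≤ 4 := by
      rw [inv_le_comm₀ (by linarith) (by norm_num)]; linarith
    have h3 : 0 ≤ (1 - 2 * σ * u)⁻¹ := inv_nonneg.2 (by linarith)
    exact mul_le_mul ((hM u hu').trans (le_max_left _ _)) (pow_le_pow_left₀ h3 h2 k)
      (pow_nonneg h3 k) (le_max_right _ _)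
  | succ N ih =>
    intro k f hf hf0
    have hf' : ContDiff ℝ (⊤ : ℕ∞) (deriv f) := by
      exact (contDiff_infty_iff_deriv.1 hf).2
    have hf'0 : ∀ u, u ∉ Set.Icc (1 / 2 : ℝ) 2 → deriv f u = 0 := by
      intro u hu
      have : f =ᶠ[nhds u] fun _ => 0 := by
        filter_upwards [isClosed_Icc.isOpen_compl.mem_nhds hu] with y hy
        exact hf0 y hy
      rw [this.deriv_eq]; simp
    obtain ⟨C1, hC1, h1⟩ := ih (k + 1) (deriv f) hf' hf'0
    obtain ⟨C2, hC2, h2⟩ := ih (k + 2) f hf hf0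
    refine ⟨C1 + (k + 1) * C2, by positivity, ?_⟩
    intro t σ ht hσ
    have hcont : ∀ (m : ℕ) (g : ℝ → ℂ), Continuous g → IntervalIntegrable
        (fun u => g u * ((((1 - 2 * σ * u)⁻¹ : ℝ) : ℂ) ^ m) *
        Complex.exp (Complex.I * ((t * (u - σ * u ^ 2) : ℝ) : ℂ))) volume (1/4) 3 := by
      intro m g hg
      apply ContinuousOn.intervalIntegrable
      rw [Set.uIcc_of_le (by norm_num)]
      apply ContinuousOn.mul
      · apply hg.continuousOn.mul
        apply ContinuousOn.pow
        apply Complex.continuous_ofReal.comp_continuousOn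
        apply ContinuousOn.inv₀ (by fun_prop)
        intro u hu
        have := hpos σ u hσ hu
        linarith
      · fun_prop
    have hI : Complex.I * t * (∫ u in (1 / 4 : ℝ)..3, f u * ((((1 - 2 * σ * u)⁻¹ : ℝ) : ℂ) ^ k) *
        Complex.exp (Complex.I * ((t * (u - σ * u ^ 2) : ℝ) : ℂ))) =
        -((∫ u in (1 / 4 : ℝ)..3, deriv f u * ((((1 - 2 * σ * u)⁻¹ : ℝ) : ℂ) ^ (k + 1)) *
        Complex.exp (Complex.I * ((t * (u - σ * u ^ 2) : ℝ) : ℂ)))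
        + (2 * σ * (k + 1)) * (∫ u in (1 / 4 : ℝ)..3, f u * ((((1 - 2 * σ * u)⁻¹ : ℝ) : ℂ) ^ (k + 2)) *
        Complex.exp (Complex.I * ((t * (u - σ * u ^ 2) : ℝ) : ℂ)))) := by
      rw [← intervalIntegral.integral_const_mul, ← intervalIntegral.integral_const_mul,
        ← intervalIntegral.integral_add (hcont _ _ hf'.continuous)
          ((hcont _ _ hf.continuous).const_mul _)]
      have hF : ∀ u ∈ Set.uIcc (1 / 4 : ℝ) 3, HasDerivAt
          (fun u => f u * ((((1 - 2 * σ * u)⁻¹ : ℝ) : ℂ) ^ (k + 1)) *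
            Complex.exp (Complex.I * ((t * (u - σ * u ^ 2) : ℝ) : ℂ)))
          ((deriv f u * ((((1 - 2 * σ * u)⁻¹ : ℝ) : ℂ) ^ (k + 1)) *
        Complex.exp (Complex.I * ((t * (u - σ * u ^ 2) : ℝ) : ℂ)) +
          (2 * σ * (k + 1)) * (f u * ((((1 - 2 * σ * u)⁻¹ : ℝ) : ℂ) ^ (k + 2)) *
        Complex.exp (Complex.I * ((t * (u - σ * u ^ 2) : ℝ) : ℂ)))) +
          Complex.I * t * (f u * ((((1 - 2 * σ * u)⁻¹ : ℝ) : ℂ) ^ k) *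
        Complex.exp (Complex.I * ((t * (u - σ * u ^ 2) : ℝ) : ℂ)))) u := by
        intro u hu
        rw [Set.uIcc_of_le (by norm_num)] at hu
        have hne : 1 - 2 * σ * u ≠ 0 := by
          have := hpos σ u hσ hu
          linarith
        have d1 : HasDerivAt f (deriv f u) u :=
          (hf.differentiable (by simp)).differentiableAt.hasDerivAt
        have d2 : HasDerivAt (fun u : ℝ => (1 - 2 * σ * u)⁻¹) (2 * σ * ((1 - 2 * σ * u)⁻¹) ^ 2) u := by
          have := (((hasDerivAt_id u).const_mul (2 * σ)).const_sub 1).inv hne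
          refine this.congr_deriv ?_
          simp only [id]
          field_simp
        have d3 := (d2.ofReal_comp).pow (k + 1)
        have d4 : HasDerivAt (fun u : ℝ => t * (u - σ * u ^ 2)) (t * (1 - 2 * σ * u)) u := by
          have := ((hasDerivAt_id u).sub (((hasDerivAt_id u).pow 2).const_mul σ)).const_mul t
          refine this.congr_deriv ?_
          simp only [id]; push_cast; ring
        have d5 := (d4.ofReal_comp.const_mul Complex.I).cexp
        have d6 := (d1.mul d3).mul d5
        have hc : (((1 - 2 * σ * u)⁻¹ : ℝ) : ℂ) * ((1 - 2 * σ * u : ℝ) : ℂ) = 1 := by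
          rw [← Complex.ofReal_mul, inv_mul_cancel₀ hne, Complex.ofReal_one]
        refine d6.congr_deriv ?_
        simp only [Pi.mul_apply, Pi.pow_apply, Nat.add_sub_cancel]
        generalize (((1 - 2 * σ * u)⁻¹ : ℝ)) = w at hc ⊢
        rw [Complex.ofReal_mul t (1 - 2 * σ * u)]
        generalize (((1 - 2 * σ * u) : ℝ) : ℂ) = z at hc ⊢
        push_cast
        linear_combination (Complex.I * t * f u * (w : ℂ) ^ k *
          Complex.exp (Complex.I * (t * (u - σ * u ^ 2)))) * hc
      have hFTC := intervalIntegral.integral_eq_sub_of_hasDerivAt hF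
        (((hcont _ _ hf'.continuous).add ((hcont _ _ hf.continuous).const_mul _)).add
          ((hcont _ _ hf.continuous).const_mul _))
      rw [intervalIntegral.integral_add ((hcont _ _ hf'.continuous).add
        ((hcont _ _ hf.continuous).const_mul _)) ((hcont _ _ hf.continuous).const_mul _)] at hFTC
      have e1 : f 3 = 0 := hf0 3 (by norm_num)
      have e2 : f (1/4) = 0 := hf0 (1/4) (by norm_num)
      simp only [e1, e2, zero_mul, sub_zero] at hFTC
      linear_combination hFTC
    have hn := congrArg norm hI
    rw [norm_neg, norm_mul, norm_mul, Complex.norm_I, one_mul, Complex.norm_real,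
      Real.norm_eq_abs] at hn
    have b1 := h1 t σ ht hσ
    have b2 := h2 t σ ht hσ
    have ht' : 0 < |t| := abs_pos.2 ht
    have hs : ‖(2 * σ * (k + 1) : ℂ)‖ ≤ (k + 1) := by
      have : (2 * σ * (k + 1) : ℂ) = ((2 * σ * (k + 1) : ℝ) : ℂ) := by push_cast; ring
      rw [this, Complex.norm_real, Real.norm_eq_abs, abs_mul, abs_mul,
        abs_of_pos (by positivity : (0:ℝ) < k + 1), abs_two]
      nlinarith [(by positivity : (0:ℝ) < k + 1)]
    have b3 : |t| * ‖∫ u in (1 / 4 : ℝ)..3, f u * ((((1 - 2 * σ * u)⁻¹ : ℝ) : ℂ) ^ k) *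
        Complex.exp (Complex.I * ((t * (u - σ * u ^ 2) : ℝ) : ℂ))‖ ≤
        (C1 + (k + 1) * C2) * (|t|⁻¹) ^ N := by
      rw [hn]
      refine (norm_add_le _ _).trans ?_
      rw [norm_mul, add_mul, mul_assoc (_ : ℝ) C2]
      exact add_le_add b1 (mul_le_mul hs b2 (norm_nonneg _) (by positivity))
    rw [pow_succ, ← mul_assoc, ← div_eq_mul_inv, le_div_iff₀ ht', mul_comm]
    exact b3

/-- The profile in the variable `ρ = |κ|²`. -/
noncomputable def Gfun (φ : ℝ → ℝ) (t : ℝ) (ρ : ℝ) : ℂ :=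
  ((Real.exp ρ * φ (Real.sqrt ρ) : ℝ) : ℂ) * Complex.exp (Complex.I * ((t * Real.sqrt ρ : ℝ) : ℂ))

theorem phi_zero {φ : ℝ → ℝ} (hφsupp : Function.support φ ⊆ Set.Icc (1 / 2) 2) {u : ℝ}
    (hu : u ∉ Set.Icc (1 / 2 : ℝ) 2) : φ u = 0 := by
  by_contra h
  exact hu (hφsupp h)

theorem Gfun_zero {φ : ℝ → ℝ} (hφsupp : Function.support φ ⊆ Set.Icc (1 / 2) 2) (t : ℝ) {ρ : ℝ}
    (hρ : ρ ∉ Set.Icc (1 / 4 : ℝ) 4) : Gfun φ t ρ = 0 := by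
  have : φ (Real.sqrt ρ) = 0 := by
    apply phi_zero hφsupp
    intro h
    apply hρ
    have h0 : 0 ≤ ρ := by
      by_contra h0
      rw [Real.sqrt_eq_zero_of_nonpos (by linarith)] at h
      norm_num at h
    have := Real.sq_sqrt h0
    constructor <;> nlinarith [h.1, h.2]
  simp [Gfun, this]

theorem Gfun_contDiff {φ : ℝ → ℝ} (hφs : ContDiff ℝ (⊤ : ℕ∞) φ)
    (hφsupp : Function.support φ ⊆ Set.Icc (1 / 2) 2) (t : ℝ) :
    ContDiff ℝ (⊤ : ℕ∞) (Gfun φ t) := by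
  rw [contDiff_iff_contDiffAt]
  intro ρ
  rcases lt_or_ge ρ (1 / 4) with h | h
  · have : Gfun φ t =ᶠ[nhds ρ] fun _ => 0 := by
      filter_upwards [isOpen_Iio.mem_nhds h] with y hy
      apply Gfun_zero hφsupp
      intro hy'
      exact absurd hy'.1 (not_le.2 hy)
    exact contDiffAt_const.congr_of_eventuallyEq this
  · have h1 : ContDiffAt ℝ (⊤ : ℕ∞) Real.sqrt ρ := Real.contDiffAt_sqrt (by linarith)
    have h2 : ContDiffAt ℝ (⊤ : ℕ∞) (fun ρ => φ (Real.sqrt ρ)) ρ :=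
      hφs.contDiffAt.comp ρ h1
    unfold Gfun
    apply ContDiffAt.mul
    · exact Complex.ofRealCLM.contDiff.contDiffAt.comp ρ (Real.contDiff_exp.contDiffAt.mul h2)
    · apply ContDiffAt.cexp
      apply contDiffAt_const.mul
      exact Complex.ofRealCLM.contDiff.contDiffAt.comp ρ (contDiffAt_const.mul h1)

theorem Gfun_compact {φ : ℝ → ℝ}
    (hφsupp : Function.support φ ⊆ Set.Icc (1 / 2) 2) (t : ℝ) :
    HasCompactSupport (Gfun φ t) :=
  HasCompactSupport.intro isCompact_Icc (fun _ h => Gfun_zero hφsupp t h)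

theorem Gfun_norm_le {φ : ℝ → ℝ} (hφ01 : ∀ s, 0 ≤ φ s ∧ φ s ≤ 1) (t ρ : ℝ) :
    ‖Gfun φ t ρ‖ ≤ Real.exp ρ := by
  unfold Gfun
  rw [norm_mul, mul_comm Complex.I, Complex.norm_exp_ofReal_mul_I, mul_one, Complex.norm_real,
    Real.norm_eq_abs, abs_mul, abs_of_pos (Real.exp_pos _), abs_of_nonneg (hφ01 _).1]
  exact mul_le_of_le_one_right (Real.exp_pos _).le (hφ01 _).2

theorem Gfun_fourier {φ : ℝ → ℝ} (hφsupp : Function.support φ ⊆ Set.Icc (1 / 2) 2) (t : ℝ)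
    (ht : t ≠ 0) (s : ℝ) :
    FourierTransform.fourier (Gfun φ t) s =
      ∫ u in (1 / 4 : ℝ)..3, ((2 * u * Real.exp (u ^ 2) * φ u : ℝ) : ℂ) *
        ((((1 - 2 * (2 * Real.pi * s / t) * u)⁻¹ : ℝ) : ℂ) ^ 0) *
        Complex.exp (Complex.I * ((t * (u - (2 * Real.pi * s / t) * u ^ 2) : ℝ) : ℂ)) := by
  rw [Real.fourier_real_eq_integral_exp_smul]
  rw [← setIntegral_eq_integral_of_forall_compl_eq_zero (s := Set.Ioi 0)]
  · rw [← integral_comp_rpow_Ioi_of_pos (p := 2) (by norm_num)]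
    rw [intervalIntegral.integral_of_le (by norm_num)]
    have hsub : Set.Ioc (1 / 4 : ℝ) 3 ⊆ Set.Ioi 0 := fun x hx => lt_trans (by norm_num) hx.1
    rw [← setIntegral_eq_of_subset_of_forall_sdiff_eq_zero measurableSet_Ioi hsub]
    · apply setIntegral_congr_fun measurableSet_Ioi
      intro u hu
      have hu : 0 < u := hu
      have e1 : u ^ (2 : ℝ) = u ^ 2 := by norm_cast
      have e2 : u ^ ((2 : ℝ) - 1) = u := by norm_num
      simp only [e1, e2, Gfun, Real.sqrt_sq hu.le]
      rw [smul_eq_mul, Complex.real_smul, pow_zero, mul_one, mul_left_comm (Complex.exp _),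
        ← Complex.exp_add, ← mul_assoc, ← Complex.ofReal_mul]
      congr 2
      · ring
      · have : t * (u - 2 * Real.pi * s / t * u ^ 2) = t * u - 2 * Real.pi * s * u ^ 2 := by
          field_simp
        rw [this]
        push_cast
        ring
    · intro u hu
      have : φ u = 0 := by
        apply phi_zero hφsupp
        intro h
        apply hu.2
        exact ⟨by linarith [h.1], by linarith [h.2]⟩
      simp [this]
  · intro ρ hρ
    rw [Gfun_zero hφsupp, smul_zero]
    intro h
    apply hρ
    exact lt_of_lt_of_le (by norm_num) h.1

/-- Nonstationary bound for the 1D Fourier transform. -/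
theorem Gfun_nonstat {φ : ℝ → ℝ} (hφs : ContDiff ℝ (⊤ : ℕ∞) φ)
    (hφsupp : Function.support φ ⊆ Set.Icc (1 / 2) 2) (N : ℕ) :
    ∃ C : ℝ, 0 ≤ C ∧ ∀ t s : ℝ, t ≠ 0 → |s| ≤ |t| / (16 * Real.pi) →
      ‖FourierTransform.fourier (Gfun φ t) s‖ ≤ C * (|t|⁻¹) ^ N := by
  obtain ⟨C, hC, h⟩ := nonstat_aux N 0 (fun u => ((2 * u * Real.exp (u ^ 2) * φ u : ℝ) : ℂ))
    (by
      apply Complex.ofRealCLM.contDiff.comp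
      exact ((contDiff_const.mul contDiff_id).mul (contDiff_id.pow 2).exp).mul hφs)
    (by
      intro u hu
      simp [phi_zero hφsupp hu])
  refine ⟨C, hC, fun t s ht hs => ?_⟩
  rw [Gfun_fourier hφsupp t ht]
  apply h t _ ht
  rw [abs_div, abs_mul, abs_of_pos (by positivity : 0 < 2 * Real.pi),
    div_le_iff₀ (abs_pos.2 ht)]
  rw [le_div_iff₀ (by positivity)] at hs
  linarith

theorem Gfun_l2 {φ : ℝ → ℝ} (hφs : ContDiff ℝ (⊤ : ℕ∞) φ) (hφ01 : ∀ s, 0 ≤ φ s ∧ φ s ≤ 1)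
    (hφsupp : Function.support φ ⊆ Set.Icc (1 / 2) 2) (t : ℝ) :
    ∫ s, ‖FourierTransform.fourier (Gfun φ t) s‖ ^ 2 ≤ 4 * Real.exp 8 := by
  have h := SchwartzMap.integral_norm_sq_fourier
    ((Gfun_compact hφsupp t).toSchwartzMap (Gfun_contDiff hφs hφsupp t))
  rw [SchwartzMap.fourier_coe] at h
  change ∫ s, ‖FourierTransform.fourier (Gfun φ t) s‖ ^ 2 = ∫ s, ‖Gfun φ t s‖ ^ 2 at h
  rw [h]
  rw [← setIntegral_eq_integral_of_forall_compl_eq_zero (s := Set.Icc (1/4) 4)]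
  · have := norm_setIntegral_le_of_norm_le_const (μ := volume) (s := Set.Icc (1/4:ℝ) 4)
      (f := fun ρ => ‖Gfun φ t ρ‖ ^ 2) (C := Real.exp 8) (by simp) (by
        intro ρ hρ
        rw [Real.norm_eq_abs, abs_of_nonneg (by positivity)]
        have h1 := Gfun_norm_le hφ01 t ρ
        have h2 : Real.exp ρ ≤ Real.exp 4 := Real.exp_le_exp.2 hρ.2
        calc ‖Gfun φ t ρ‖ ^ 2 ≤ (Real.exp 4) ^ 2 :=
              pow_le_pow_left₀ (norm_nonneg _) (h1.trans h2) 2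
          _ = Real.exp 8 := by rw [← Real.exp_nat_mul]; norm_num)
    refine (le_abs_self _).trans (this.trans ?_)
    rw [mul_comm]
    gcongr
    simp [Measure.real]
    norm_num
  · intro ρ hρ
    rw [Gfun_zero hφsupp t hρ]; simp

theorem Gfun_weighted {φ : ℝ → ℝ} (hφs : ContDiff ℝ (⊤ : ℕ∞) φ) (hφ01 : ∀ s, 0 ≤ φ s ∧ φ s ≤ 1)
    (hφsupp : Function.support φ ⊆ Set.Icc (1 / 2) 2) (d : ℕ) (hd : 2 ≤ d) :
    ∃ C : ℝ, 0 ≤ C ∧ ∀ t : ℝ, 1 ≤ |t| →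
      ∫ s, ‖FourierTransform.fourier (Gfun φ t) s‖ * (Real.sqrt (1 + (2 * Real.pi * s) ^ 2))⁻¹ ^ ((d : ℝ) / 2)
        ≤ C * |t| ^ (-(((d : ℝ) - 1) / 2)) := by
  obtain ⟨C1, hC1, hns⟩ := Gfun_nonstat hφs hφsupp d
  refine ⟨C1 / 8 + Real.pi * (16 * Real.pi) ^ (d - 1) + 2 * Real.exp 8, by positivity, ?_⟩
  intro t ht
  have ht0 : t ≠ 0 := by rintro rfl; norm_num at ht
  have htp : 0 < |t| := by linarith
  have hpi := Real.pi_pos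
  set h : ℝ → ℝ := fun s => ‖FourierTransform.fourier (Gfun φ t) s‖ with hh
  set a : ℝ := |t| / (16 * Real.pi) with ha
  have hap : 0 < a := by positivity
  set ε : ℝ := |t| ^ (-(((d : ℝ) - 1) / 2)) with hε
  have hεp : 0 < ε := Real.rpow_pos_of_pos htp _
  set S := (Gfun_compact hφsupp t).toSchwartzMap (Gfun_contDiff hφs hφsupp t) with hS
  have hSF : ∀ s, FourierTransform.fourier (Gfun φ t) s = (FourierTransform.fourier S) s := by
    intro s
    rw [SchwartzMap.fourier_coe]; rfl
  have hint2 : Integrable (fun s => h s ^ 2) := by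
    have := ((FourierTransform.fourier S).memLp 2 volume).norm.integrable_sq
    simpa only [hh, hSF] using this
  have hcau : Integrable (fun s : ℝ => (1 + (s / a) ^ 2)⁻¹) :=
    integrable_inv_one_add_sq.comp_div hap.ne'
  have hcauI : ∫ s : ℝ, (1 + (s / a) ^ 2)⁻¹ = a * Real.pi := by
    rw [Measure.integral_comp_div (fun s : ℝ => (1 + s ^ 2)⁻¹) a, integral_univ_inv_one_add_sq,
      abs_of_pos hap, smul_eq_mul]
  have hpt : ∀ s : ℝ, h s * (Real.sqrt (1 + (2 * Real.pi * s) ^ 2))⁻¹ ^ ((d : ℝ) / 2) ≤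
      (2 * C1 * (|t|⁻¹) ^ d + ε⁻¹ * (a⁻¹) ^ d) * (1 + (s / a) ^ 2)⁻¹ + ε / 2 * h s ^ 2 := by
    intro s
    have hhs : 0 ≤ h s := norm_nonneg _
    have hrt1 : 1 ≤ Real.sqrt (1 + (2 * Real.pi * s) ^ 2) := by
      rw [Real.one_le_sqrt]; nlinarith [sq_nonneg (2 * Real.pi * s)]
    rcases le_or_gt |s| a with hs | hs
    · have h1 : h s ≤ C1 * (|t|⁻¹) ^ d := hns t s ht0 hs
      have h2 : (Real.sqrt (1 + (2 * Real.pi * s) ^ 2))⁻¹ ^ ((d : ℝ) / 2) ≤ 1 :=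
        Real.rpow_le_one (by positivity) (inv_le_one_of_one_le₀ hrt1) (by positivity)
      have h3 : 1 / 2 ≤ (1 + (s / a) ^ 2)⁻¹ := by
        rw [one_div]
        apply inv_anti₀ (by positivity)
        have : (s / a) ^ 2 ≤ 1 := by
          rw [sq_le_one_iff_abs_le_one, abs_div, abs_of_pos hap]
          exact div_le_one_of_le₀ hs hap.le
        linarith
      have h4 : h s * (Real.sqrt (1 + (2 * Real.pi * s) ^ 2))⁻¹ ^ ((d : ℝ) / 2) ≤ C1 * (|t|⁻¹) ^ d :=
        (mul_le_of_le_one_right hhs h2).trans h1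
      have h5 : C1 * (|t|⁻¹) ^ d ≤ (2 * C1 * (|t|⁻¹) ^ d) * (1 + (s / a) ^ 2)⁻¹ := by
        have : 0 ≤ C1 * (|t|⁻¹) ^ d := by positivity
        nlinarith
      have h6 : 0 ≤ ε⁻¹ * (a⁻¹) ^ d * (1 + (s / a) ^ 2)⁻¹ := by positivity
      have h7 : 0 ≤ ε / 2 * h s ^ 2 := by positivity
      nlinarith
    · have hsp : 0 < |s| := hap.trans hs
      set w := (Real.sqrt (1 + (2 * Real.pi * s) ^ 2))⁻¹ ^ ((d : ℝ) / 2) with hw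
      have hw0 : 0 ≤ w := by positivity
      have hw2 : w ^ 2 ≤ (|s|⁻¹) ^ d := by
        rw [hw, ← Real.rpow_natCast, ← Real.rpow_mul (by positivity)]
        have : (d : ℝ) / 2 * (2 : ℕ) = (d : ℕ) := by push_cast; ring
        rw [this, Real.rpow_natCast]
        apply pow_le_pow_left₀ (by positivity)
        apply inv_anti₀ hsp
        apply Real.le_sqrt_of_sq_le
        rw [sq_abs]
        have : 1 ≤ (2 * Real.pi) ^ 2 := by nlinarith [Real.pi_gt_three]
        nlinarith [sq_nonneg s]
      have hsd : (|s|⁻¹) ^ d ≤ 2 * (a⁻¹) ^ d * (1 + (s / a) ^ 2)⁻¹ := by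
        obtain ⟨e, rfl⟩ := Nat.exists_eq_add_of_le hd
        rw [add_comm 2 e, pow_add, pow_add]
        have h1 : (|s|⁻¹) ^ e ≤ (a⁻¹) ^ e := by
          apply pow_le_pow_left₀ (by positivity)
          exact inv_anti₀ hap hs.le
        have h2 : (|s|⁻¹) ^ 2 ≤ 2 * (a⁻¹) ^ 2 * (1 + (s / a) ^ 2)⁻¹ := by
          have : 2 * (a⁻¹) ^ 2 * (1 + (s / a) ^ 2)⁻¹ = 2 / (a ^ 2 + s ^ 2) := by
            field_simp
          rw [this, inv_pow, sq_abs, inv_eq_one_div, div_le_div_iff₀ (by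
            rw [← sq_abs]; positivity) (by positivity)]
          have : a ^ 2 ≤ s ^ 2 := by
            rw [← sq_abs s]; exact pow_le_pow_left₀ hap.le hs.le 2
          linarith
        calc (|s|⁻¹) ^ e * (|s|⁻¹) ^ 2 ≤ (a⁻¹) ^ e * (2 * (a⁻¹) ^ 2 * (1 + (s / a) ^ 2)⁻¹) :=
              mul_le_mul h1 h2 (by positivity) (by positivity)
          _ = _ := by ring
      have hamgm : h s * w ≤ ε / 2 * h s ^ 2 + ε⁻¹ / 2 * w ^ 2 := by
        have : 0 ≤ ε⁻¹ / 2 * (ε * h s - w) ^ 2 := by positivity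
        have e : ε⁻¹ / 2 * (ε * h s - w) ^ 2 = ε / 2 * h s ^ 2 + ε⁻¹ / 2 * w ^ 2 - h s * w := by
          field_simp; ring
        linarith
      have h8 : ε⁻¹ / 2 * w ^ 2 ≤ ε⁻¹ / 2 * (2 * (a⁻¹) ^ d * (1 + (s / a) ^ 2)⁻¹) :=
        mul_le_mul_of_nonneg_left (hw2.trans hsd) (by positivity)
      have h9 : 0 ≤ 2 * C1 * (|t|⁻¹) ^ d * (1 + (s / a) ^ 2)⁻¹ := by positivity
      linarith
  have hmain : ∫ s, h s * (Real.sqrt (1 + (2 * Real.pi * s) ^ 2))⁻¹ ^ ((d : ℝ) / 2) ≤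
      (2 * C1 * (|t|⁻¹) ^ d + ε⁻¹ * (a⁻¹) ^ d) * (a * Real.pi) + ε / 2 * (4 * Real.exp 8) := by
    calc _ ≤ ∫ s, ((2 * C1 * (|t|⁻¹) ^ d + ε⁻¹ * (a⁻¹) ^ d) * (1 + (s / a) ^ 2)⁻¹ + ε / 2 * h s ^ 2) := by
          apply integral_mono_of_nonneg
          · exact Filter.Eventually.of_forall fun s => by
              show 0 ≤ h s * _
              have : 0 ≤ h s := norm_nonneg _
              positivity
          · exact (hcau.const_mul _).add (hint2.const_mul _)
          · exact Filter.Eventually.of_forall hpt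
      _ = (2 * C1 * (|t|⁻¹) ^ d + ε⁻¹ * (a⁻¹) ^ d) * (a * Real.pi) + ε / 2 * ∫ s, h s ^ 2 := by
          rw [integral_add (hcau.const_mul _) (hint2.const_mul _), integral_const_mul,
            integral_const_mul, hcauI]
      _ ≤ _ := by
          gcongr
          exact Gfun_l2 hφs hφ01 hφsupp t
  refine hmain.trans ?_
  obtain ⟨e, rfl⟩ := Nat.exists_eq_add_of_le hd
  have hee : (((|t|⁻¹) ^ (1 + e) : ℝ)) = ε * ε := by
    rw [hε, ← Real.rpow_add htp, ← Real.rpow_natCast, Real.inv_rpow htp.le, ← Real.rpow_neg htp.le]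
    congr 1
    push_cast; ring
  have hε1 : ε ≤ 1 := Real.rpow_le_one_of_one_le_of_nonpos ht (by
    push_cast
    have : (0:ℝ) ≤ e := Nat.cast_nonneg e
    linarith)
  have e1 : (|t|⁻¹) ^ (2 + e) * (a * Real.pi) = (ε * ε) / 16 := by
    rw [← hee, ha, show 2 + e = (1 + e) + 1 by ring, pow_succ]
    field_simp
  have e2 : ε⁻¹ * (a⁻¹) ^ (2 + e) * (a * Real.pi) = Real.pi * (16 * Real.pi) ^ (1 + e) * ε := by
    have : a⁻¹ = 16 * Real.pi * |t|⁻¹ := by rw [ha]; field_simp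
    have h3 : (a⁻¹) ^ (2 + e) * a = (16 * Real.pi) ^ (1 + e) * (ε * ε) := by
      rw [← hee, ← mul_pow, ← this, show 2 + e = (1 + e) + 1 by ring, pow_succ, mul_assoc,
        inv_mul_cancel₀ hap.ne', mul_one]
    calc _ = ε⁻¹ * ((a⁻¹) ^ (2 + e) * a) * Real.pi := by ring
      _ = _ := by rw [h3]; field_simp
  have e3 : 2 + e - 1 = 1 + e := by omega
  rw [e3, add_mul, e2, mul_assoc (2 * C1), e1]
  have h10 : C1 * (ε * ε) ≤ C1 * ε := mul_le_mul_of_nonneg_left (by nlinarith) hC1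
  nlinarith

theorem gauss_norm_le (d : ℕ) (s : ℝ) (x : Ed d) :
    ‖∫ κ : Ed d, Complex.exp (-(1 - 2 * Real.pi * s * Complex.I) * ‖κ‖ ^ 2 + Complex.I * ⟪x, κ⟫)‖ ≤
      Real.pi ^ ((d : ℝ) / 2) * (Real.sqrt (1 + (2 * Real.pi * s) ^ 2))⁻¹ ^ ((d : ℝ) / 2) := by
  set b : ℂ := 1 - 2 * Real.pi * s * Complex.I with hb
  have hbre : b.re = 1 := by simp [hb]
  have hbim : b.im = -(2 * Real.pi * s) := by simp [hb]
  have hnb : ‖b‖ = Real.sqrt (1 + (2 * Real.pi * s) ^ 2) := by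
    rw [Complex.norm_def, Complex.normSq_apply, hbre, hbim]
    congr 1; ring
  rw [GaussianFourier.integral_cexp_neg_mul_sq_norm_add (by rw [hbre]; norm_num), norm_mul]
  have h1 : ‖Complex.exp (Complex.I ^ 2 * (‖x‖ : ℂ) ^ 2 / (4 * b))‖ ≤ 1 := by
    rw [Complex.norm_exp, Real.exp_le_one_iff]
    have : Complex.I ^ 2 * (‖x‖ : ℂ) ^ 2 / (4 * b) = ((-(‖x‖ ^ 2) / 4 : ℝ) : ℂ) * b⁻¹ := by
      rw [Complex.I_sq, ← div_div, ← div_eq_mul_inv]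
      push_cast
      ring
    rw [this, Complex.re_ofReal_mul, Complex.inv_re, hbre]
    have h1 : 0 ≤ 1 / Complex.normSq b := by have := Complex.normSq_nonneg b; positivity
    have h2 : -(‖x‖ ^ 2) / 4 ≤ 0 := by nlinarith [sq_nonneg ‖x‖]
    exact mul_nonpos_of_nonpos_of_nonneg h2 h1
  have h2 : ‖((Real.pi : ℂ) / b) ^ ((Module.finrank ℝ (Ed d) : ℂ) / 2)‖ =
      Real.pi ^ ((d : ℝ) / 2) * (Real.sqrt (1 + (2 * Real.pi * s) ^ 2))⁻¹ ^ ((d : ℝ) / 2) := by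
    have : ((Module.finrank ℝ (Ed d) : ℂ) / 2) = (((d : ℝ) / 2 : ℝ) : ℂ) := by
      rw [finrank_euclideanSpace_fin]; push_cast; ring
    rw [this, Complex.norm_cpow_real, norm_div, hnb, Complex.norm_real, Real.norm_eq_abs,
      abs_of_pos Real.pi_pos, div_eq_mul_inv, Real.mul_rpow Real.pi_pos.le (by positivity)]
  rw [h2]
  exact mul_le_of_le_one_right (by positivity) h1

theorem kernel_large {φ : ℝ → ℝ} (hφs : ContDiff ℝ (⊤ : ℕ∞) φ)
    (hφsupp : Function.support φ ⊆ Set.Icc (1 / 2) 2) (d : ℕ) (t : ℝ) (x : Ed d) :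
    ‖∫ κ : Ed d, Complex.exp (Complex.I * ((⟪x, κ⟫ : ℂ) + (t : ℂ) * ((‖κ‖ : ℝ) : ℂ))) *
      ((φ ‖κ‖ : ℝ) : ℂ)‖ ≤ Real.pi ^ ((d : ℝ) / 2) *
      ∫ s, ‖FourierTransform.fourier (Gfun φ t) s‖ *
        (Real.sqrt (1 + (2 * Real.pi * s) ^ 2))⁻¹ ^ ((d : ℝ) / 2) := by
  set S := (Gfun_compact hφsupp t).toSchwartzMap (Gfun_contDiff hφs hφsupp t) with hS
  set F : ℝ → ℂ := fun s => (FourierTransform.fourier S) s with hF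
  have hSF : ∀ s, FourierTransform.fourier (Gfun φ t) s = F s := by
    intro s
    rw [hF]
    simp only [SchwartzMap.fourier_coe]; rfl
  have hFint : Integrable F := (FourierTransform.fourier S).integrable
  have hFcont : Continuous F := (FourierTransform.fourier S).continuous
  have hinv : ∀ ρ : ℝ, Gfun φ t ρ = ∫ s : ℝ, Complex.exp (2 * Real.pi * s * ρ * Complex.I) * F s := by
    intro ρ
    have h1 : FourierTransformInv.fourierInv (FourierTransform.fourier S) = S :=
      FourierTransform.fourierInv_fourier_eq S
    have h2 : (FourierTransformInv.fourierInv (FourierTransform.fourier S)) ρ = Gfun φ t ρ := by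
      rw [h1]; rfl
    rw [← h2, SchwartzMap.fourierInv_coe, Real.fourierInv_eq']
    apply integral_congr_ae
    refine Filter.Eventually.of_forall fun s => ?_
    simp only [smul_eq_mul, hF]
    congr 2
    simp
    ring
  have hpt : ∀ κ : Ed d, Complex.exp (Complex.I * ((⟪x, κ⟫ : ℂ) + (t : ℂ) * ((‖κ‖ : ℝ) : ℂ))) *
      ((φ ‖κ‖ : ℝ) : ℂ) = ∫ s : ℝ, Complex.exp (-(1 - 2 * Real.pi * s * Complex.I) * ‖κ‖ ^ 2 +
        Complex.I * ⟪x, κ⟫) * F s := by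
    intro κ
    have h1 := hinv (‖κ‖ ^ 2)
    have h2 : ∀ s : ℝ, Complex.exp (-(1 - 2 * Real.pi * s * Complex.I) * ‖κ‖ ^ 2 +
        Complex.I * ⟪x, κ⟫) * F s = Complex.exp (-(‖κ‖ : ℂ) ^ 2 + Complex.I * ⟪x, κ⟫) *
        (Complex.exp (2 * Real.pi * s * ((‖κ‖ ^ 2 : ℝ) : ℂ) * Complex.I) * F s) := by
      intro s
      rw [← mul_assoc, ← Complex.exp_add]
      congr 2
      push_cast
      ring
    simp_rw [h2]
    rw [integral_const_mul, ← h1, Gfun, Real.sqrt_sq (norm_nonneg _)]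
    rw [Complex.ofReal_mul, Complex.ofReal_exp, mul_right_comm, ← mul_assoc, ← mul_assoc,
      ← Complex.exp_add, ← Complex.exp_add]
    congr 2
    push_cast
    ring
  simp_rw [hpt]
  have hint : Integrable (Function.uncurry fun (κ : Ed d) (s : ℝ) =>
      Complex.exp (-(1 - 2 * Real.pi * s * Complex.I) * ‖κ‖ ^ 2 +
        Complex.I * ⟪x, κ⟫) * F s) (volume.prod volume) := by
    have h1 : Integrable (fun κ : Ed d => Complex.exp (-(1 : ℂ) * ‖κ‖ ^ 2 + 0 * ⟪(0 : Ed d), κ⟫)) :=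
      GaussianFourier.integrable_cexp_neg_mul_sq_norm_add (by simp) 0 0
    have h2 := h1.mul_prod hFint
    refine h2.mono ?_ ?_
    · apply Continuous.aestronglyMeasurable
      unfold Function.uncurry
      fun_prop
    · refine Filter.Eventually.of_forall fun z => le_of_eq ?_
      simp only [Function.uncurry, norm_mul, Complex.norm_exp]
      congr 2
      simp [← Complex.ofReal_pow]
  rw [integral_integral_swap hint, ← integral_const_mul]
  refine norm_integral_le_of_norm_le ?_ (Filter.Eventually.of_forall fun s => ?_)
  · apply Integrable.const_mul
    simp_rw [hSF]
    refine hFint.norm.mono ?_ ?_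
    · apply Continuous.aestronglyMeasurable
      apply hFcont.norm.mul
      apply Continuous.rpow_const
      · apply Continuous.inv₀ (by fun_prop)
        intro s
        positivity
      · intro s; right; positivity
    · refine Filter.Eventually.of_forall fun s => ?_
      rw [norm_mul, Real.norm_of_nonneg (by positivity)]
      apply mul_le_of_le_one_right (norm_nonneg _)
      rw [Real.norm_of_nonneg (by positivity)]
      apply Real.rpow_le_one (by positivity) _ (by positivity)
      apply inv_le_one_of_one_le₀
      rw [Real.one_le_sqrt]; nlinarith [sq_nonneg (2 * Real.pi * s)]
  · rw [integral_mul_const, norm_mul, hSF]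
    calc _ ≤ _ := mul_le_mul_of_nonneg_right (gauss_norm_le d s x) (norm_nonneg _)
      _ = _ := by ring

theorem kernel_bound {φ : ℝ → ℝ} (hφs : ContDiff ℝ (⊤ : ℕ∞) φ) (hφ01 : ∀ s, 0 ≤ φ s ∧ φ s ≤ 1)
    (hφsupp : Function.support φ ⊆ Set.Icc (1 / 2) 2) (d : ℕ) (hd : 2 ≤ d) :
    ∃ C : ℝ, 0 < C ∧ ∀ (t : ℝ) (x : Ed d), t ≠ 0 →
    ‖∫ κ : Ed d, Complex.exp (Complex.I * ((⟪x, κ⟫ : ℂ) + (t : ℂ) * ((‖κ‖ : ℝ) : ℂ))) *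
      ((φ ‖κ‖ : ℝ) : ℂ)‖ ≤ C * |t| ^ (-(((d : ℝ) - 1) / 2)) := by
  obtain ⟨C, hC, h⟩ := Gfun_weighted hφs hφ01 hφsupp d hd
  set V := volume.real (Metric.closedBall (0 : Ed d) 2) with hV
  have hV0 : 0 ≤ V := measureReal_nonneg
  refine ⟨Real.pi ^ ((d : ℝ) / 2) * C + V + 1, by positivity, fun t x ht => ?_⟩
  have htp : 0 < |t| := abs_pos.2 ht
  have hd' : (2 : ℝ) ≤ d := by exact_mod_cast hd
  have hp0 : 0 < |t| ^ (-(((d : ℝ) - 1) / 2)) := Real.rpow_pos_of_pos htp _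
  rcases le_total 1 |t| with h1 | h1
  · refine (kernel_large hφs hφsupp d t x).trans ?_
    calc _ ≤ Real.pi ^ ((d : ℝ) / 2) * (C * |t| ^ (-(((d : ℝ) - 1) / 2))) :=
          mul_le_mul_of_nonneg_left (h t h1) (by positivity)
      _ ≤ _ := by nlinarith
  · have h2 : 1 ≤ |t| ^ (-(((d : ℝ) - 1) / 2)) :=
      Real.one_le_rpow_of_pos_of_le_one_of_nonpos htp h1 (by linarith)
    have h3 : ‖∫ κ : Ed d, Complex.exp (Complex.I * ((⟪x, κ⟫ : ℂ) + (t : ℂ) * ((‖κ‖ : ℝ) : ℂ))) *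
      ((φ ‖κ‖ : ℝ) : ℂ)‖ ≤ 1 * V := by
      rw [← setIntegral_eq_integral_of_forall_compl_eq_zero (s := Metric.closedBall (0 : Ed d) 2)]
      · apply norm_setIntegral_le_of_norm_le_const measure_closedBall_lt_top
        intro κ _
        rw [norm_mul, ← Complex.ofReal_mul, ← Complex.ofReal_add, mul_comm Complex.I,
          Complex.norm_exp_ofReal_mul_I, one_mul, Complex.norm_real,
          Real.norm_of_nonneg (hφ01 _).1]
        exact (hφ01 _).2
      · intro κ hκ
        rw [phi_zero hφsupp, Complex.ofReal_zero, mul_zero]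
        intro h
        apply hκ
        simpa using h.2
    have : 0 ≤ Real.pi ^ ((d : ℝ) / 2) * C := by positivity
    nlinarith

theorem kernel_scaled {φ : ℝ → ℝ} (hφs : ContDiff ℝ (⊤ : ℕ∞) φ) (hφ01 : ∀ s, 0 ≤ φ s ∧ φ s ≤ 1)
    (hφsupp : Function.support φ ⊆ Set.Icc (1 / 2) 2) (d : ℕ) (hd : 2 ≤ d) :
    ∃ C : ℝ, 0 < C ∧ ∀ (j : ℤ) (t : ℝ) (x : Ed d), t ≠ 0 →
    ‖∫ κ : Ed d, Complex.exp (Complex.I * ((⟪x, κ⟫ : ℂ) + (t : ℂ) * ((‖κ‖ : ℝ) : ℂ))) *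
      ((φ ((2 : ℝ) ^ (-j) * ‖κ‖) : ℝ) : ℂ)‖ ≤ C * (|t| ^ (-(((d : ℝ) - 1) / 2)) *
        2 ^ ((j : ℝ) * (((d : ℝ) + 1) / 2))) := by
  obtain ⟨C, hC, h⟩ := kernel_bound hφs hφ01 hφsupp d hd
  refine ⟨C, hC, fun j t x ht => ?_⟩
  set R : ℝ := (2 : ℝ) ^ j with hR
  have hRp : 0 < R := by positivity
  have htp : 0 < |t| := abs_pos.2 ht
  have h1 := Measure.integral_comp_smul (volume : Measure (Ed d)) (fun κ : Ed d =>
    Complex.exp (Complex.I * ((⟪x, κ⟫ : ℂ) + (t : ℂ) * ((‖κ‖ : ℝ) : ℂ))) *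
      ((φ ((2 : ℝ) ^ (-j) * ‖κ‖) : ℝ) : ℂ)) R
  have h2 := h (R * t) (R • x) (mul_ne_zero hRp.ne' ht)
  have e1 : ∀ κ : Ed d, Complex.exp (Complex.I * ((⟪R • x, κ⟫ : ℂ) + ((R * t : ℝ) : ℂ) * ((‖κ‖ : ℝ) : ℂ))) *
      ((φ ‖κ‖ : ℝ) : ℂ) = Complex.exp (Complex.I * ((⟪x, R • κ⟫ : ℂ) + (t : ℂ) * ((‖R • κ‖ : ℝ) : ℂ))) *
      ((φ ((2 : ℝ) ^ (-j) * ‖R • κ‖) : ℝ) : ℂ) := by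
    intro κ
    rw [real_inner_smul_left, real_inner_smul_right, norm_smul, Real.norm_of_nonneg hRp.le,
      zpow_neg, ← mul_assoc (2 ^ j)⁻¹, ← hR, inv_mul_cancel₀ hRp.ne', one_mul]
    congr 2
    push_cast
    ring
  simp_rw [e1] at h2
  rw [h1, norm_smul, Real.norm_eq_abs, abs_abs, abs_of_pos (by positivity),
    finrank_euclideanSpace_fin, inv_mul_le_iff₀ (by positivity)] at h2
  refine h2.trans (le_of_eq ?_)
  have e2 : R ^ d = 2 ^ ((j : ℝ) * d) := by
    rw [hR, Real.rpow_mul (by norm_num), Real.rpow_intCast, Real.rpow_natCast]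
  rw [abs_mul, abs_of_pos hRp, Real.mul_rpow hRp.le htp.le, e2]
  have e3 : R ^ (-(((d : ℝ) - 1) / 2)) = 2 ^ ((j : ℝ) * (-(((d : ℝ) - 1) / 2))) := by
    rw [hR, Real.rpow_mul (by norm_num), Real.rpow_intCast]
  have e4 : (2 : ℝ) ^ ((j : ℝ) * (((d : ℝ) + 1) / 2)) =
      2 ^ ((j : ℝ) * d) * 2 ^ ((j : ℝ) * (-(((d : ℝ) - 1) / 2))) := by
    rw [← Real.rpow_add (by norm_num)]
    congr 1; ring
  rw [e3, e4]
  ring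

/-- The operator of the statement. -/
noncomputable def Tw (d : ℕ) (φ : ℝ → ℝ) (j : ℤ) (t : ℝ) (g : Ed d → ℂ) (x : Ed d) : ℂ :=
  (((2 * Real.pi) ^ (-(d : ℝ)) : ℝ) : ℂ) *
          ∫ κ, Complex.exp (Complex.I * ((⟪x, κ⟫ : ℂ) + (t : ℂ) * ((‖κ‖ : ℝ) : ℂ))) *
            ((φ ((2 : ℝ) ^ (-j) * ‖κ‖) : ℝ) : ℂ) * ftransform d g κ

/-- The Fourier multiplier symbol in the normalization of Mathlib. -/
noncomputable def symM (d : ℕ) (φ : ℝ → ℝ) (j : ℤ) (t : ℝ) (ξ : Ed d) : ℂ :=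
  Complex.exp (Complex.I * ((t : ℂ) * ((‖(2 * Real.pi) • ξ‖ : ℝ) : ℂ))) *
    ((φ ((2 : ℝ) ^ (-j) * ‖(2 * Real.pi) • ξ‖) : ℝ) : ℂ)

theorem radial_compact (d : ℕ) {φ : ℝ → ℝ} (hφsupp : Function.support φ ⊆ Set.Icc (1 / 2) 2)
    (j : ℤ) (κ : Ed d) (hκ : κ ∉ Metric.closedBall (0 : Ed d) (2 * 2 ^ j)) :
    φ ((2 : ℝ) ^ (-j) * ‖κ‖) = 0 := by
  apply phi_zero hφsupp
  intro h
  apply hκ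
  have h2 := h.2
  rw [zpow_neg, inv_mul_le_iff₀ (by positivity)] at h2
  rw [mem_closedBall_zero_iff]
  linarith

theorem symM_compact (d : ℕ) {φ : ℝ → ℝ} (hφsupp : Function.support φ ⊆ Set.Icc (1 / 2) 2)
    (j : ℤ) (t : ℝ) : HasCompactSupport (symM d φ j t) := by
  refine HasCompactSupport.intro (isCompact_closedBall (0 : Ed d) (2 * 2 ^ j)) fun ξ hξ => ?_
  unfold symM
  rw [radial_compact d hφsupp, Complex.ofReal_zero, mul_zero]
  intro h
  apply hξ
  rw [mem_closedBall_zero_iff, norm_smul, Real.norm_of_nonneg (by positivity)] at h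
  rw [mem_closedBall_zero_iff]
  nlinarith [Real.pi_gt_three, norm_nonneg ξ]

theorem symM_contDiff (d : ℕ) {φ : ℝ → ℝ} (hφs : ContDiff ℝ (⊤ : ℕ∞) φ)
    (hφsupp : Function.support φ ⊆ Set.Icc (1 / 2) 2)
    (j : ℤ) (t : ℝ) : ContDiff ℝ (⊤ : ℕ∞) (symM d φ j t) := by
  rw [contDiff_iff_contDiffAt]
  intro ξ
  by_cases hξ : ξ = 0
  · subst hξ
    have : symM d φ j t =ᶠ[nhds 0] fun _ => 0 := by
      have hc : Continuous fun ξ : Ed d => (2 : ℝ) ^ (-j) * ‖(2 * Real.pi) • ξ‖ := by fun_prop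
      have hm : (fun ξ : Ed d => (2 : ℝ) ^ (-j) * ‖(2 * Real.pi) • ξ‖) ⁻¹' Set.Iio (1 / 2) ∈
          nhds (0 : Ed d) := (isOpen_Iio.preimage hc).mem_nhds (by simp)
      filter_upwards [hm] with y hy
      unfold symM
      rw [phi_zero hφsupp, Complex.ofReal_zero, mul_zero]
      intro h
      exact absurd h.1 (not_le.2 hy)
    exact contDiffAt_const.congr_of_eventuallyEq this
  · have h1 : ContDiffAt ℝ (⊤ : ℕ∞) (fun ξ : Ed d => ‖(2 * Real.pi) • ξ‖) ξ := by
      apply ContDiffAt.norm ℝ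
      · exact (contDiff_const_smul (2 * Real.pi)).contDiffAt
      · simp [hξ, Real.pi_ne_zero]
    unfold symM
    apply ContDiffAt.mul
    · apply ContDiffAt.cexp
      apply contDiffAt_const.mul
      apply contDiffAt_const.mul
      exact Complex.ofRealCLM.contDiff.contDiffAt.comp ξ h1
    · exact Complex.ofRealCLM.contDiff.contDiffAt.comp ξ
        (hφs.contDiffAt.comp ξ (contDiffAt_const.mul h1))

theorem symM_norm_le (d : ℕ) {φ : ℝ → ℝ} (hφ01 : ∀ s, 0 ≤ φ s ∧ φ s ≤ 1)
    (j : ℤ) (t : ℝ) (ξ : Ed d) : ‖symM d φ j t ξ‖ ≤ 1 := by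
  unfold symM
  rw [norm_mul, ← Complex.ofReal_mul, mul_comm Complex.I, Complex.norm_exp_ofReal_mul_I, one_mul,
    Complex.norm_real, Real.norm_of_nonneg (hφ01 _).1]
  exact (hφ01 _).2

/-- The operator as a continuous linear map on Schwartz space. -/
noncomputable def Wop (d : ℕ) (φ : ℝ → ℝ) (j : ℤ) (t : ℝ) :
    SchwartzMap (Ed d) ℂ →L[ℂ] SchwartzMap (Ed d) ℂ :=
  SchwartzMap.fourierMultiplierCLM ℂ (symM d φ j t)

theorem ftransform_eq (d : ℕ) (g : Ed d → ℂ) (ξ : Ed d) :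
    ftransform d g ((2 * Real.pi) • ξ) = FourierTransform.fourier g ξ := by
  rw [Real.fourier_eq', ftransform]
  apply integral_congr_ae
  refine Filter.Eventually.of_forall fun x => ?_
  simp only [smul_eq_mul, real_inner_smul_right]
  congr 2
  push_cast
  ring

theorem Wop_eq (d : ℕ) {φ : ℝ → ℝ} (hφs : ContDiff ℝ (⊤ : ℕ∞) φ)
    (hφsupp : Function.support φ ⊆ Set.Icc (1 / 2) 2)
    (j : ℤ) (t : ℝ) (g : SchwartzMap (Ed d) ℂ) (x : Ed d) :
    Wop d φ j t g x = Tw d φ j t g x := by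
  have hT : (symM d φ j t).HasTemperateGrowth :=
    (symM_compact d hφsupp j t).hasTemperateGrowth (symM_contDiff d hφs hφsupp j t)
  have h1 := Measure.integral_comp_smul (volume : Measure (Ed d)) (fun κ : Ed d =>
    Complex.exp (Complex.I * ((⟪x, κ⟫ : ℂ) + (t : ℂ) * ((‖κ‖ : ℝ) : ℂ))) *
            ((φ ((2 : ℝ) ^ (-j) * ‖κ‖) : ℝ) : ℂ) * ftransform d g κ) (2 * Real.pi)
  rw [finrank_euclideanSpace_fin, abs_of_pos (by positivity), Complex.real_smul] at h1
  unfold Tw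
  rw [Real.rpow_neg (by positivity), Real.rpow_natCast, ← h1, Wop,
    SchwartzMap.fourierMultiplierCLM_apply, SchwartzMap.fourierInv_coe, Real.fourierInv_eq']
  apply integral_congr_ae
  refine Filter.Eventually.of_forall fun ξ => ?_
  simp only [SchwartzMap.smulLeftCLM_apply_apply hT, smul_eq_mul, ftransform_eq,
    SchwartzMap.fourier_coe]
  rw [← mul_assoc]
  congr 1
  unfold symM
  rw [← mul_assoc, ← Complex.exp_add]
  congr 2
  rw [real_inner_smul_right, real_inner_comm]
  push_cast
  ring

theorem lintegral_sq_eq (d : ℕ) (g : SchwartzMap (Ed d) ℂ) :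
    ∫⁻ x, ‖g x‖ₑ ^ 2 = ENNReal.ofReal (∫ x, ‖g x‖ ^ 2) := by
  rw [ofReal_integral_eq_lintegral_ofReal ((g.memLp 2 volume).norm.integrable_sq)
    (Filter.Eventually.of_forall fun x => by positivity)]
  apply lintegral_congr
  intro x
  rw [ENNReal.ofReal_pow (norm_nonneg _), ofReal_norm]

theorem Wop_l2 (d : ℕ) {φ : ℝ → ℝ} (hφs : ContDiff ℝ (⊤ : ℕ∞) φ)
    (hφ01 : ∀ s, 0 ≤ φ s ∧ φ s ≤ 1)
    (hφsupp : Function.support φ ⊆ Set.Icc (1 / 2) 2)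
    (j : ℤ) (t : ℝ) (g : SchwartzMap (Ed d) ℂ) :
    ∫⁻ x, ‖Wop d φ j t g x‖ₑ ^ 2 ≤ ∫⁻ x, ‖g x‖ₑ ^ 2 := by
  have hT : (symM d φ j t).HasTemperateGrowth :=
    (symM_compact d hφsupp j t).hasTemperateGrowth (symM_contDiff d hφs hφsupp j t)
  rw [lintegral_sq_eq, ← SchwartzMap.integral_norm_sq_fourier, ← lintegral_sq_eq, Wop,
    SchwartzMap.fourierMultiplierCLM_apply, FourierTransform.fourier_fourierInv_eq]
  rw [lintegral_sq_eq d g, ← SchwartzMap.integral_norm_sq_fourier, ← lintegral_sq_eq]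
  apply lintegral_mono
  intro x
  simp only [SchwartzMap.smulLeftCLM_apply_apply hT, smul_eq_mul]
  gcongr
  rw [enorm_le_iff_norm_le, norm_mul]
  exact mul_le_of_le_one_left (norm_nonneg _) (symM_norm_le d hφ01 j t x)

theorem Tw_linfty {φ : ℝ → ℝ} (hφs : ContDiff ℝ (⊤ : ℕ∞) φ)
    (hφsupp : Function.support φ ⊆ Set.Icc (1 / 2) 2) (d : ℕ) (j : ℤ) (t : ℝ) (B : ℝ)
    (hB : ∀ x : Ed d,
      ‖∫ κ : Ed d, Complex.exp (Complex.I * ((⟪x, κ⟫ : ℂ) + (t : ℂ) * ((‖κ‖ : ℝ) : ℂ))) *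
      ((φ ((2 : ℝ) ^ (-j) * ‖κ‖) : ℝ) : ℂ)‖ ≤ B) (g : SchwartzMap (Ed d) ℂ) (x : Ed d) :
    ‖Tw d φ j t g x‖ ≤ (2 * Real.pi) ^ (-(d : ℝ)) * B * ∫ y, ‖g y‖ := by
  have hφc : Continuous fun κ : Ed d => φ ((2 : ℝ) ^ (-j) * ‖κ‖) :=
    hφs.continuous.comp (by fun_prop)
  have hφi : Integrable fun κ : Ed d => φ ((2 : ℝ) ^ (-j) * ‖κ‖) := by
    apply hφc.integrable_of_hasCompactSupport
    exact HasCompactSupport.intro (isCompact_closedBall (0 : Ed d) (2 * 2 ^ j))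
      fun κ hκ => radial_compact d hφsupp j κ hκ
  unfold Tw
  rw [norm_mul, Complex.norm_real, Real.norm_of_nonneg (by positivity), mul_assoc]
  gcongr
  have e1 : ∀ κ : Ed d, Complex.exp (Complex.I * ((⟪x, κ⟫ : ℂ) + (t : ℂ) * ((‖κ‖ : ℝ) : ℂ))) *
            ((φ ((2 : ℝ) ^ (-j) * ‖κ‖) : ℝ) : ℂ) * ftransform d g κ =
      ∫ y, (Complex.exp (Complex.I * ((⟪x - y, κ⟫ : ℂ) + (t : ℂ) * ((‖κ‖ : ℝ) : ℂ))) *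
            ((φ ((2 : ℝ) ^ (-j) * ‖κ‖) : ℝ) : ℂ)) * g y := by
    intro κ
    rw [ftransform, ← integral_const_mul]
    apply integral_congr_ae
    refine Filter.Eventually.of_forall fun y => ?_
    simp only
    rw [inner_sub_left, ← mul_assoc, mul_right_comm (Complex.exp _), ← Complex.exp_add]
    congr 3
    push_cast
    ring
  simp_rw [e1]
  have hint : Integrable (Function.uncurry fun (κ y : Ed d) =>
      (Complex.exp (Complex.I * ((⟪x - y, κ⟫ : ℂ) + (t : ℂ) * ((‖κ‖ : ℝ) : ℂ))) *
            ((φ ((2 : ℝ) ^ (-j) * ‖κ‖) : ℝ) : ℂ)) * g y) (volume.prod volume) := by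
    have h2 := (hφi.ofReal (𝕜 := ℂ)).mul_prod g.integrable (ν := volume)
    refine h2.mono ?_ ?_
    · apply Continuous.aestronglyMeasurable
      unfold Function.uncurry
      have h3 : Continuous fun z : Ed d × Ed d => φ ((2 : ℝ) ^ (-j) * ‖z.1‖) :=
        hφc.comp continuous_fst
      have h4 : Continuous fun z : Ed d × Ed d => g z.2 := g.continuous.comp continuous_snd
      fun_prop
    · refine Filter.Eventually.of_forall fun z => le_of_eq ?_
      simp only [Function.uncurry, norm_mul]
      rw [← Complex.ofReal_mul, ← Complex.ofReal_add, mul_comm Complex.I,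
        Complex.norm_exp_ofReal_mul_I, one_mul]
      rfl
  rw [integral_integral_swap hint, ← integral_const_mul]
  refine norm_integral_le_of_norm_le (g.integrable.norm.const_mul _)
    (Filter.Eventually.of_forall fun y => ?_)
  rw [integral_mul_const, norm_mul]
  exact mul_le_mul_of_nonneg_right (hB (x - y)) (norm_nonneg _)

/-- Smooth truncation of a Schwartz function at height `s`. -/
theorem schwartz_trunc (d : ℕ) (g : SchwartzMap (Ed d) ℂ) (s : ℝ) (hs : 0 < s) :
    ∃ g1 g2 : SchwartzMap (Ed d) ℂ, g = g1 + g2 ∧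
      (∀ x, ‖g1 x‖ ≤ ‖g x‖) ∧ (∀ x, ‖g x‖ < s → g1 x = 0) ∧
      (∀ x, ‖g2 x‖ ≤ ‖g x‖) ∧ (∀ x, 2 * s ≤ ‖g x‖ → g2 x = 0) := by
  set χ : Ed d → ℝ := fun x => Real.smoothTransition (‖g x‖ ^ 2 / s ^ 2 - 1) with hχ
  have hχs : ContDiff ℝ (⊤ : ℕ∞) χ := by
    apply Real.smoothTransition.contDiff.comp
    exact (((g.smooth _).norm_sq ℝ).div_const _).sub contDiff_const
  have hs1 : ContDiff ℝ (⊤ : ℕ∞) (fun x => χ x • g x) := hχs.smul (g.smooth _)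
  have hz : ∀ x, ‖g x‖ < s → χ x = 0 := by
    intro x hx
    apply Real.smoothTransition.zero_of_nonpos
    rw [sub_nonpos, div_le_one (by positivity)]
    exact pow_le_pow_left₀ (norm_nonneg _) hx.le 2
  have hone : ∀ x, 2 * s ≤ ‖g x‖ → χ x = 1 := by
    intro x hx
    apply Real.smoothTransition.one_of_one_le
    rw [le_sub_iff_add_le, le_div_iff₀ (by positivity)]
    nlinarith
  have hχ0 : ∀ x, 0 ≤ χ x := fun x => Real.smoothTransition.nonneg _
  have hχ1 : ∀ x, χ x ≤ 1 := fun x => Real.smoothTransition.le_one _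
  have hc : HasCompactSupport (fun x => χ x • g x) := by
    have ht := SchwartzMap.tendsto_cocompact g
    have h1 : ∀ᶠ x in Filter.cocompact (Ed d), ‖g x‖ < s := by
      have := ht (Metric.ball_mem_nhds (0 : ℂ) hs)
      filter_upwards [this] with x hx
      simpa using hx
    rw [Filter.eventually_iff, Filter.mem_cocompact] at h1
    obtain ⟨K, hK, hKs⟩ := h1
    refine HasCompactSupport.intro hK fun x hx => ?_
    rw [hz x (hKs hx), zero_smul]
  refine ⟨hc.toSchwartzMap hs1, g - hc.toSchwartzMap hs1, by simp, ?_, ?_, ?_, ?_⟩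
  · intro x
    simp only [HasCompactSupport.toSchwartzMap_toFun, norm_smul, Real.norm_eq_abs, abs_of_nonneg (hχ0 x)]
    exact mul_le_of_le_one_left (norm_nonneg _) (hχ1 x)
  · intro x hx
    simp [hz x hx]
  · intro x
    have : (g - hc.toSchwartzMap hs1) x = (1 - χ x) • g x := by
      simp [sub_smul]
    rw [this, norm_smul, Real.norm_eq_abs, abs_of_nonneg (by linarith [hχ1 x])]
    exact mul_le_of_le_one_left (norm_nonneg _) (by linarith [hχ0 x])
  · intro x hx
    simp [hone x hx]

theorem schwartz_rpow_integrable (d : ℕ) (g : SchwartzMap (Ed d) ℂ) (r : ℝ) (hr : 0 < r) :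
    Integrable (fun x => ‖g x‖ ^ r) := by
  have h := (g.memLp (ENNReal.ofReal r) (volume : Measure (Ed d))).integrable_norm_rpow (by simpa using hr) (by simp)
  rwa [ENNReal.toReal_ofReal hr.le] at h

/-- Weak-type step of the interpolation argument. -/
theorem weak_step (d : ℕ) (T : SchwartzMap (Ed d) ℂ →L[ℂ] SchwartzMap (Ed d) ℂ) (A : ℝ)
    (hA : 0 < A) (hinf : ∀ f x, ‖T f x‖ ≤ A * ∫ y, ‖f y‖)
    (h2 : ∀ f, ∫⁻ x, ‖T f x‖ₑ ^ 2 ≤ ∫⁻ x, ‖f x‖ₑ ^ 2) (q : ℝ) (hq : 2 < q)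
    (g : SchwartzMap (Ed d) ℂ) (N : ℝ) (hN : N = ∫ y, ‖g y‖ ^ (q / (q - 1))) (hN0 : 0 < N)
    (l : ℝ) (hl : 0 < l) :
    volume {x | l < ‖T g x‖} ≤
      ENNReal.ofReal (4 * l ^ (-2 : ℝ)) *
        ∫⁻ x, {x | ‖g x‖ < 2 * (2 * A * N / l) ^ (q - 1)}.indicator
          (fun x => ENNReal.ofReal (‖g x‖ ^ (2 : ℝ))) x := by
  set s := (2 * A * N / l) ^ (q - 1) with hsdef
  have hs : 0 < s := by positivity
  obtain ⟨g1, g2, hg, h1le, h1z, h2le, h2z⟩ := schwartz_trunc d g s hs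
  have hT : ∀ x, T g x = T g1 x + T g2 x := by
    intro x
    conv_lhs => rw [hg, map_add]
    rfl
  have hg1 : ∫ y, ‖g1 y‖ ≤ s ^ (1 - q / (q - 1)) * N := by
    rw [hN, ← integral_const_mul]
    apply integral_mono (g1.integrable.norm)
    · exact (schwartz_rpow_integrable d g _ (div_pos (by linarith) (by linarith))).const_mul _
    intro y
    simp only
    by_cases hy : ‖g y‖ < s
    · rw [h1z y hy, norm_zero]; positivity
    · push Not at hy
      have hgy : 0 < ‖g y‖ := hs.trans_le hy
      refine (h1le y).trans ?_
      have e : ‖g y‖ = ‖g y‖ ^ (1 - q / (q - 1)) * ‖g y‖ ^ (q / (q - 1)) := by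
        rw [← Real.rpow_add hgy]; simp
      conv_lhs => rw [e]
      refine mul_le_mul_of_nonneg_right ?_ (by positivity)
      apply Real.rpow_le_rpow_of_nonpos hs hy
      rw [sub_nonpos, le_div_iff₀ (by linarith)]; linarith
  have hhalf : ∀ x, ‖T g1 x‖ ≤ l / 2 := by
    intro x
    refine (hinf g1 x).trans ?_
    have : s ^ (1 - q / (q - 1)) = l / (2 * A * N) := by
      rw [hsdef, ← Real.rpow_mul (by positivity)]
      have : (q - 1) * (1 - q / (q - 1)) = -1 := by
        have : q - 1 ≠ 0 := by linarith
        field_simp; ring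
      rw [this, Real.rpow_neg_one, inv_div]
    calc A * ∫ y, ‖g1 y‖ ≤ A * (s ^ (1 - q / (q - 1)) * N) := by gcongr
      _ = l / 2 := by rw [this]; field_simp
  have hsub : {x | l < ‖T g x‖} ⊆ {x | ENNReal.ofReal (l ^ 2 / 4) ≤ ‖T g2 x‖ₑ ^ 2} := by
    intro x hx
    simp only [Set.mem_ofPred_eq] at hx ⊢
    rw [← ofReal_norm, ← ENNReal.ofReal_pow (norm_nonneg _)]
    apply ENNReal.ofReal_le_ofReal
    have := hhalf x
    have h3 := norm_add_le (T g1 x) (T g2 x)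
    rw [← hT x] at h3
    nlinarith [norm_nonneg (T g2 x)]
  have hcheb : volume {x | l < ‖T g x‖} ≤ (∫⁻ x, ‖T g2 x‖ₑ ^ 2) / ENNReal.ofReal (l ^ 2 / 4) := by
    refine (measure_mono hsub).trans ?_
    apply meas_ge_le_lintegral_div
    · have := (T g2).continuous
      fun_prop
    · simp; positivity
    · simp
  refine hcheb.trans ?_
  rw [ENNReal.div_eq_inv_mul, ← ENNReal.ofReal_inv_of_pos (by positivity)]
  have e : (l ^ 2 / 4)⁻¹ = 4 * l ^ (-2 : ℝ) := by
    rw [Real.rpow_neg hl.le, Real.rpow_two, inv_div]; rfl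
  rw [e]
  refine mul_le_mul_right ?_ _
  refine (h2 g2).trans ?_
  apply lintegral_mono
  intro x
  simp only
  rw [← ofReal_norm, ← ENNReal.ofReal_pow (norm_nonneg _)]
  by_cases hx : ‖g x‖ < 2 * s
  · rw [Set.indicator_of_mem (by exact hx)]
    apply ENNReal.ofReal_le_ofReal
    rw [Real.rpow_two]
    exact pow_le_pow_left₀ (norm_nonneg _) (h2le x) 2
  · rw [h2z x (not_lt.1 hx)]; simp

/-- The inner one-dimensional integral. -/
theorem inner_int (q : ℝ) (hq : 2 < q) (c : ℝ) (hc : 0 < c) (b : ℝ) (hb : 0 ≤ b) :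
    ∫⁻ l in Set.Ioi (0 : ℝ), ({l : ℝ | b < 2 * (c / l) ^ (q - 1)}.indicator
      (fun l => ENNReal.ofReal (4 * b ^ (2 : ℝ) * l ^ (q - 3))) l) ≤
    ENNReal.ofReal (4 / (q - 2) * c ^ (q - 2) * 2 ^ ((q - 2) / (q - 1)) * b ^ (q / (q - 1))) := by
  rcases hb.eq_or_lt with rfl | hb
  · rw [Real.zero_rpow two_ne_zero]
    simp
  set L := c * (2 / b) ^ (1 / (q - 1)) with hL
  have hL0 : 0 < L := by positivity
  have hmono : ∀ l ∈ Set.Ioi (0 : ℝ), ({l : ℝ | b < 2 * (c / l) ^ (q - 1)}.indicator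
      (fun l => ENNReal.ofReal (4 * b ^ (2 : ℝ) * l ^ (q - 3))) l) ≤
      (Set.Iic L).indicator (fun l => ENNReal.ofReal (4 * b ^ (2 : ℝ) * l ^ (q - 3))) l := by
    intro l hl
    have hl : 0 < l := hl
    by_cases h : b < 2 * (c / l) ^ (q - 1)
    · have : l ≤ L := by
        have h1 : b / 2 < (c / l) ^ (q - 1) := by linarith
        have h2 : (b / 2) ^ (1 / (q - 1)) < c / l := by
          have h3 := Real.rpow_lt_rpow (by positivity) h1 (z := 1 / (q - 1))
            (one_div_pos.2 (by linarith))
          rwa [← Real.rpow_mul (by positivity), mul_one_div_cancel (by linarith),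
            Real.rpow_one] at h3
        have h4 : (2 / b) ^ (1 / (q - 1)) = ((b / 2) ^ (1 / (q - 1)))⁻¹ := by
          rw [← Real.inv_rpow (by positivity), inv_div]
        rw [hL, h4, ← div_eq_mul_inv, le_div_iff₀ (by positivity)]
        rw [lt_div_iff₀ hl] at h2
        linarith
      rw [Set.indicator_of_mem (by exact h), Set.indicator_of_mem (by exact this)]
    · rw [Set.indicator_of_notMem (by exact h)]; exact zero_le
  refine (setLIntegral_mono' measurableSet_Ioi hmono).trans ?_
  rw [setLIntegral_indicator measurableSet_Iic, Set.inter_comm, Set.Ioi_inter_Iic]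
  have hint : IntervalIntegrable (fun l : ℝ => 4 * b ^ (2 : ℝ) * l ^ (q - 3)) volume 0 L :=
    (intervalIntegral.intervalIntegrable_rpow' (by linarith)).const_mul _
  rw [intervalIntegrable_iff_integrableOn_Ioc_of_le hL0.le] at hint
  rw [← ofReal_integral_eq_lintegral_ofReal hint]
  · apply ENNReal.ofReal_le_ofReal
    rw [← intervalIntegral.integral_of_le hL0.le, intervalIntegral.integral_const_mul,
      integral_rpow (Or.inl (by linarith)), show q - 3 + 1 = q - 2 by ring,
      Real.zero_rpow (by linarith), sub_zero, hL, Real.mul_rpow (by positivity) (by positivity),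
      ← Real.rpow_mul (by positivity), Real.div_rpow (by positivity) hb.le]
    have e1 : 1 / (q - 1) * (q - 2) = (q - 2) / (q - 1) := by ring
    rw [e1]
    have e2 : b ^ (2 : ℝ) / b ^ ((q - 2) / (q - 1)) = b ^ (q / (q - 1)) := by
      rw [← Real.rpow_sub hb]
      congr 1
      have : q - 1 ≠ 0 := by linarith
      field_simp; ring
    rw [← e2]
    apply le_of_eq
    have : q - 2 ≠ 0 := by linarith
    field_simp
  · filter_upwards [ae_restrict_mem measurableSet_Ioc] with l hl
    have := hl.1
    simp only [Pi.zero_apply]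
    positivity

/-- Elementary real interpolation between `L² → L²` and `L¹ → L^∞`. -/
theorem interp (d : ℕ) (T : SchwartzMap (Ed d) ℂ →L[ℂ] SchwartzMap (Ed d) ℂ) (A : ℝ)
    (hA : 0 < A) (hinf : ∀ f x, ‖T f x‖ ≤ A * ∫ y, ‖f y‖)
    (h2 : ∀ f, ∫⁻ x, ‖T f x‖ₑ ^ 2 ≤ ∫⁻ x, ‖f x‖ₑ ^ 2) (q : ℝ) (hq : 2 < q)
    (g : SchwartzMap (Ed d) ℂ) (N : ℝ) (hN : N = ∫ y, ‖g y‖ ^ (q / (q - 1))) (hN0 : 0 < N) :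
    ∫⁻ x, ENNReal.ofReal (‖T g x‖ ^ q) ≤
      ENNReal.ofReal (q * (4 / (q - 2) * 2 ^ (q - 2) * 2 ^ ((q - 2) / (q - 1))) *
        (A ^ (q - 2) * N ^ (q - 1))) := by
  have hTm : AEMeasurable (fun x => ‖T g x‖) (volume : Measure (Ed d)) :=
    ((T g).continuous.norm).aemeasurable
  rw [lintegral_rpow_eq_lintegral_meas_lt_mul volume (Filter.Eventually.of_forall fun x => norm_nonneg _) hTm
    (by linarith)]
  set c := 2 * A * N with hc
  have hc0 : 0 < c := by positivity
  set S : Set (ℝ × Ed d) := {z | ‖g z.2‖ < 2 * (c / z.1) ^ (q - 1)} with hS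
  have hSm : MeasurableSet S := by
    apply measurableSet_lt
    · exact (g.continuous.norm.measurable).comp measurable_snd
    · exact ((measurable_const.div measurable_fst).pow_const _).const_mul _
  set F : ℝ → Ed d → ℝ≥0∞ := fun l x =>
    S.indicator (fun z => ENNReal.ofReal (4 * ‖g z.2‖ ^ (2 : ℝ) * z.1 ^ (q - 3))) (l, x) with hF
  have hFm : Measurable (Function.uncurry F) := by
    have : Function.uncurry F =
      S.indicator (fun z => ENNReal.ofReal (4 * ‖g z.2‖ ^ (2 : ℝ) * z.1 ^ (q - 3))) := by
      ext ⟨l, x⟩; rfl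
    rw [this]
    apply Measurable.indicator _ hSm
    apply ENNReal.measurable_ofReal.comp
    exact ((((g.continuous.norm.measurable).comp measurable_snd).pow_const _).const_mul _).mul
      (measurable_fst.pow_const _)
  have hstep : ∫⁻ l in Set.Ioi (0 : ℝ), volume {x | l < ‖T g x‖} * ENNReal.ofReal (l ^ (q - 1)) ≤
      ∫⁻ l in Set.Ioi (0 : ℝ), ∫⁻ x, F l x := by
    apply setLIntegral_mono' measurableSet_Ioi
    intro l hl
    have hl : 0 < l := hl
    refine (mul_le_mul_left (weak_step d T A hA hinf h2 q hq g N hN hN0 l hl) _).trans ?_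
    rw [mul_right_comm, ← ENNReal.ofReal_mul (by positivity), ← lintegral_const_mul']
    · apply lintegral_mono
      intro x
      simp only [hF]
      by_cases hx : ‖g x‖ < 2 * (c / l) ^ (q - 1)
      · rw [Set.indicator_of_mem (by exact hx), Set.indicator_of_mem (by exact hx),
          ← ENNReal.ofReal_mul (by positivity)]
        apply ENNReal.ofReal_le_ofReal
        simp only
        rw [show q - 3 = -2 + (q - 1) by ring, Real.rpow_add hl]
        apply le_of_eq; ring
      · rw [Set.indicator_of_notMem (by exact hx)]; simp
    · simp
  have hq0 : (0 : ℝ) < q - 2 := by linarith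
  calc _ ≤ ENNReal.ofReal q * ∫⁻ l in Set.Ioi (0 : ℝ), ∫⁻ x, F l x := by gcongr
    _ = ENNReal.ofReal q * ∫⁻ x, ∫⁻ l in Set.Ioi (0 : ℝ), F l x := by
      rw [lintegral_lintegral_swap hFm.aemeasurable]
    _ ≤ ENNReal.ofReal q * ∫⁻ x, ENNReal.ofReal
        (4 / (q - 2) * c ^ (q - 2) * 2 ^ ((q - 2) / (q - 1)) * ‖g x‖ ^ (q / (q - 1))) := by
      gcongr with x
      exact inner_int q hq c hc0 ‖g x‖ (norm_nonneg _)
    _ = ENNReal.ofReal q * ENNReal.ofReal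
        (4 / (q - 2) * c ^ (q - 2) * 2 ^ ((q - 2) / (q - 1)) * N) := by
      rw [← ofReal_integral_eq_lintegral_ofReal, integral_const_mul, ← hN]
      · exact (schwartz_rpow_integrable d g _ (div_pos (by linarith) (by linarith))).const_mul _
      · filter_upwards with x
        simp only [Pi.zero_apply]
        positivity
    _ = _ := by
      rw [← ENNReal.ofReal_mul (by linarith)]
      congr 1
      rw [hc, Real.mul_rpow (by positivity) hN0.le, Real.mul_rpow (by positivity) hA.le,
        show q - 1 = q - 2 + 1 by ring, Real.rpow_add hN0, Real.rpow_one]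
      ring

/-- `eLpNorm` form of the interpolation bound. -/
theorem interp_eLp (d : ℕ) (T : SchwartzMap (Ed d) ℂ →L[ℂ] SchwartzMap (Ed d) ℂ) (A : ℝ)
    (hA : 0 < A) (hinf : ∀ f x, ‖T f x‖ ≤ A * ∫ y, ‖f y‖)
    (h2 : ∀ f, ∫⁻ x, ‖T f x‖ₑ ^ 2 ≤ ∫⁻ x, ‖f x‖ₑ ^ 2) (q : ℝ) (hq : 2 < q)
    (g : SchwartzMap (Ed d) ℂ) :
    eLpNorm (fun x => T g x) (ENNReal.ofReal q) volume ≤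
      ENNReal.ofReal ((q * (4 / (q - 2) * 2 ^ (q - 2) * 2 ^ ((q - 2) / (q - 1)))) ^ (1 / q) *
        A ^ (2 * (1 / 2 - 1 / q))) *
        eLpNorm g (ENNReal.ofReal (q / (q - 1))) volume := by
  have hq0 : (0 : ℝ) < q - 2 := by linarith
  have hq1 : (0 : ℝ) < q - 1 := by linarith
  have hq' : (0 : ℝ) < q / (q - 1) := div_pos (by linarith) hq1
  set N := ∫ y, ‖g y‖ ^ (q / (q - 1)) with hN
  have hgN : eLpNorm g (ENNReal.ofReal (q / (q - 1))) volume =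
      ENNReal.ofReal (N ^ ((q - 1) / q)) := by
    rw [(g.memLp _ _).eLpNorm_eq_integral_rpow_norm (by simpa using hq') (by simp),
      ENNReal.toReal_ofReal hq'.le, inv_div]
  have hNn : 0 ≤ N := integral_nonneg fun y => by positivity
  rcases hNn.eq_or_lt with h0 | hN0
  · have hg0 : g = 0 := by
      have : eLpNorm g (ENNReal.ofReal (q / (q - 1))) volume = 0 := by
        rw [hgN, ← h0, Real.zero_rpow (by positivity)]; simp
      rw [eLpNorm_eq_zero_iff g.continuous.aestronglyMeasurable (by simpa using hq')] at this
      have := Continuous.ae_eq_iff_eq volume g.continuous continuous_zero |>.1 this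
      ext x
      exact congrFun this x
    subst hg0
    simp
  · have hi := interp d T A hA hinf h2 q hq g N hN hN0
    rw [eLpNorm_eq_lintegral_rpow_enorm_toReal (by simp; linarith) (by simp),
      ENNReal.toReal_ofReal (by linarith)]
    have e : ∀ x, ‖T g x‖ₑ ^ q = ENNReal.ofReal (‖T g x‖ ^ q) := by
      intro x
      rw [← ofReal_norm, ENNReal.ofReal_rpow_of_nonneg (norm_nonneg _) (by linarith)]
    simp_rw [e]
    refine (ENNReal.rpow_le_rpow hi (by positivity)).trans ?_
    rw [ENNReal.ofReal_rpow_of_nonneg (by positivity) (by positivity), hgN,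
      ← ENNReal.ofReal_mul (by positivity)]
    apply le_of_eq
    congr 1
    rw [Real.mul_rpow (by positivity) (by positivity),
      Real.mul_rpow (x := A ^ (q - 2)) (by positivity) (by positivity),
      ← Real.rpow_mul hA.le, ← Real.rpow_mul hN0.le, ← mul_assoc]
    have e1 : (q - 2) * (1 / q) = 2 * (1 / 2 - 1 / q) := by
      have : q ≠ 0 := by linarith
      field_simp
    have e2 : (q - 1) * (1 / q) = (q - 1) / q := by ring
    rw [e1, e2]
/-- Frequency-localized dispersive estimate for the half-wave propagator:
with `φ` smooth, `[0,1]`-valued, supported in `[1/2, 2]`, `2 ≤ p ≤ ∞`, `1/p + 1/p' = 1`,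
the function `w_j(x) = (2π)^{-d} ∫ e^{i x·κ} e^{i t|κ|} φ(2^{-j}|κ|) ĝ(κ) dκ` satisfies
`‖w_j‖_{L^p} ≤ C |t|^{-(d-1)(p-2)/(2p)} 2^{j(d+1)(p-2)/(2p)} ‖g‖_{L^{p'}}`
(note `(p-2)/(2p) = 1/2 - 1/p`). -/
theorem stmt18 (d : ℕ) (hd : 2 ≤ d) (p p' : ℝ≥0∞) (hp : 2 ≤ p) (hpc : p⁻¹ + p'⁻¹ = 1)
    (φ : ℝ → ℝ) (hφs : ContDiff ℝ (⊤ : ℕ∞) φ) (hφ01 : ∀ s, 0 ≤ φ s ∧ φ s ≤ 1)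
    (hφsupp : Function.support φ ⊆ Set.Icc (1 / 2) 2) :
    ∃ C : ℝ, 0 < C ∧ ∀ (j : ℤ) (t : ℝ), t ≠ 0 → ∀ g : SchwartzMap (Ed d) ℂ,
      eLpNorm (fun x : Ed d => (((2 * Real.pi) ^ (-(d : ℝ)) : ℝ) : ℂ) *
          ∫ κ, Complex.exp (Complex.I * ((⟪x, κ⟫ : ℂ) + (t : ℂ) * ((‖κ‖ : ℝ) : ℂ))) *
            ((φ ((2 : ℝ) ^ (-j) * ‖κ‖) : ℝ) : ℂ) * ftransform d (⇑g) κ) p volume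
        ≤ ENNReal.ofReal C *
            ENNReal.ofReal (|t| ^ (-((d : ℝ) - 1) * (1 / 2 - (p⁻¹).toReal))) *
            ENNReal.ofReal ((2 : ℝ) ^ ((j : ℝ) * ((d : ℝ) + 1) * (1 / 2 - (p⁻¹).toReal))) *
            eLpNorm (⇑g) p' volume := by
  obtain ⟨C, hC, hK⟩ := kernel_scaled hφs hφ01 hφsupp d hd
  set A : ℤ → ℝ → ℝ := fun j t => (2 * Real.pi) ^ (-(d : ℝ)) * (C *
    (|t| ^ (-(((d : ℝ) - 1) / 2)) * 2 ^ ((j : ℝ) * (((d : ℝ) + 1) / 2)))) with hAdef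
  have hA : ∀ j t, t ≠ 0 → 0 < A j t := by
    intro j t ht
    have : 0 < |t| := abs_pos.2 ht
    simp only [hAdef]
    positivity
  have hinf : ∀ j t, t ≠ 0 → ∀ (f : SchwartzMap (Ed d) ℂ) x,
      ‖Wop d φ j t f x‖ ≤ A j t * ∫ y, ‖f y‖ := by
    intro j t ht f x
    rw [Wop_eq d hφs hφsupp]
    exact Tw_linfty hφs hφsupp d j t _ (fun x => hK j t x ht) f x
  have hTw : ∀ (j : ℤ) (t : ℝ) (g : SchwartzMap (Ed d) ℂ), (fun x : Ed d => (((2 * Real.pi) ^ (-(d : ℝ)) : ℝ) : ℂ) *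
          ∫ κ, Complex.exp (Complex.I * ((⟪x, κ⟫ : ℂ) + (t : ℂ) * ((‖κ‖ : ℝ) : ℂ))) *
            ((φ ((2 : ℝ) ^ (-j) * ‖κ‖) : ℝ) : ℂ) * ftransform d (⇑g) κ) =
      fun x => Wop d φ j t g x := by
    intro j t g
    ext x
    exact (Wop_eq d hφs hφsupp j t g x).symm
  -- powers of `A`
  have hApow : ∀ j t, t ≠ 0 → ∀ θ : ℝ, A j t ^ (2 * θ) =
      ((2 * Real.pi) ^ (-(d : ℝ)) * C) ^ (2 * θ) * |t| ^ (-((d : ℝ) - 1) * θ) *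
        2 ^ ((j : ℝ) * ((d : ℝ) + 1) * θ) := by
    intro j t ht θ
    have : 0 < |t| := abs_pos.2 ht
    simp only [hAdef]
    rw [← mul_assoc, Real.mul_rpow (by positivity) (by positivity),
      Real.mul_rpow (x := |t| ^ (-(((d : ℝ) - 1) / 2))) (by positivity) (by positivity),
      ← Real.rpow_mul this.le, ← Real.rpow_mul (by norm_num : (0 : ℝ) ≤ 2), ← mul_assoc]
    rw [show -(((d : ℝ) - 1) / 2) * (2 * θ) = -((d : ℝ) - 1) * θ by ring,
      show (j : ℝ) * (((d : ℝ) + 1) / 2) * (2 * θ) = (j : ℝ) * ((d : ℝ) + 1) * θ by ring]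
  have hfin : ∀ (D : ℝ) j t, t ≠ 0 → 0 ≤ D → ∀ θ : ℝ,
      ENNReal.ofReal (D * A j t ^ (2 * θ)) =
      ENNReal.ofReal (D * ((2 * Real.pi) ^ (-(d : ℝ)) * C) ^ (2 * θ)) *
            ENNReal.ofReal (|t| ^ (-((d : ℝ) - 1) * θ)) *
            ENNReal.ofReal ((2 : ℝ) ^ ((j : ℝ) * ((d : ℝ) + 1) * θ)) := by
    intro D j t ht hD θ
    rw [hApow j t ht, ← ENNReal.ofReal_mul (by positivity), ← ENNReal.ofReal_mul (by positivity)]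
    congr 1; ring
  -- it suffices to bound by a constant times a power of `A`
  suffices H : ∃ D : ℝ, 0 < D ∧ ∀ (j : ℤ) (t : ℝ), t ≠ 0 → ∀ g : SchwartzMap (Ed d) ℂ,
      eLpNorm (fun x => Wop d φ j t g x) p volume ≤
        ENNReal.ofReal (D * A j t ^ (2 * (1 / 2 - (p⁻¹).toReal))) * eLpNorm (⇑g) p' volume by
    obtain ⟨D, hD, H⟩ := H
    refine ⟨D * ((2 * Real.pi) ^ (-(d : ℝ)) * C) ^ (2 * (1 / 2 - (p⁻¹).toReal)), by positivity, ?_⟩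
    intro j t ht g
    rw [hTw, ← hfin D j t ht hD.le]
    exact H j t ht g
  by_cases hpt : p = ⊤
  · subst hpt
    have hp' : p' = 1 := by
      rw [ENNReal.inv_top, zero_add] at hpc
      exact ENNReal.inv_eq_one.1 hpc
    subst hp'
    refine ⟨1, one_pos, fun j t ht g => ?_⟩
    have : A j t ^ (2 * (1 / 2 - ((⊤ : ℝ≥0∞)⁻¹).toReal)) = A j t := by simp
    rw [this, one_mul, eLpNorm_exponent_top, eLpNorm_one_eq_lintegral_enorm]
    apply eLpNormEssSup_le_of_ae_enorm_bound
    filter_upwards with x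
    rw [← ofReal_norm, ← ofReal_integral_norm_eq_lintegral_enorm g.integrable,
      ← ENNReal.ofReal_mul (hA j t ht).le]
    exact ENNReal.ofReal_le_ofReal (hinf j t ht g x)
  have hq : (ENNReal.ofReal p.toReal) = p := ENNReal.ofReal_toReal hpt
  have hq2 : 2 ≤ p.toReal := by
    rw [← ENNReal.toReal_ofNat 2]
    exact ENNReal.toReal_mono hpt hp
  generalize p.toReal = q at hq hq2
  subst hq
  have hq0 : 0 < q := by linarith
  have hp' : p' = ENNReal.ofReal (q / (q - 1)) := by
    have h1 : p'⁻¹ = 1 - (ENNReal.ofReal q)⁻¹ := by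
      rw [← hpc, ENNReal.add_sub_cancel_left]
      simpa using hq0
    rw [← inv_inj, h1, ← ENNReal.ofReal_inv_of_pos hq0,
      ← ENNReal.ofReal_inv_of_pos (div_pos hq0 (by linarith)), ← ENNReal.ofReal_one,
      ← ENNReal.ofReal_sub _ (by positivity)]
    congr 1
    field_simp
  subst hp'
  have hinv : ((ENNReal.ofReal q)⁻¹).toReal = 1 / q := by
    rw [ENNReal.toReal_inv, ENNReal.toReal_ofReal hq0.le, one_div]
  rw [hinv]
  rcases hq2.eq_or_lt with rfl | hq2
  · refine ⟨1, one_pos, fun j t ht g => ?_⟩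
    have e : (2 : ℝ) / (2 - 1) = 2 := by norm_num
    rw [e, sub_self, mul_zero, Real.rpow_zero, one_mul, ENNReal.ofReal_one, one_mul]
    rw [eLpNorm_eq_lintegral_rpow_enorm_toReal (by simp) (by simp),
      eLpNorm_eq_lintegral_rpow_enorm_toReal (by simp) (by simp),
      ENNReal.toReal_ofReal (by norm_num)]
    apply ENNReal.rpow_le_rpow _ (by norm_num)
    simp only [ENNReal.rpow_two]
    exact Wop_l2 d hφs hφ01 hφsupp j t g
  · have hq3 : 0 < q - 2 := by linarith
    refine ⟨(q * (4 / (q - 2) * 2 ^ (q - 2) * 2 ^ ((q - 2) / (q - 1)))) ^ (1 / q), by positivity,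
      fun j t ht g => ?_⟩
    exact interp_eLp d (Wop d φ j t) (A j t) (hA j t ht) (hinf j t ht)
      (fun f => Wop_l2 d hφs hφ01 hφsupp j t f) q hq2 g
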